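/- Let A₁ and A₂ be complex Banach algebras and let φ : A₁ → A₂ be a continuous algebra homomorphism with dense range such that every element of A₁* is of the form F∘φ for some F ∈ A₂*. If A₁ is weakly amenable, then A₂ is weakly amenable. -/

import Mathlib

/-- `D : A → A*` (a continuous linear map into the dual) is a *derivation* when
`D(ab) = D(a)·b + a·D(b)`, where `A*` is an `A`-bimodule via `(F·a)(x) = F(ax)` and
`(a·F)(x) = F(xa)`; pairing against `x : A` gives the condition below. -/
def IsDerivation {A : Type*} [NonUnitalNormedRing A] [NormedSpace ℂ A]
    (D : A →L[ℂ] (A →L[ℂ] ℂ)) : Prop :=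
  ∀ a b x : A, D (a * b) x = D a (b * x) + D b (x * a)

/-- A map `D : A → A*` is *cyclic* when `⟨D(a), b⟩ + ⟨D(b), a⟩ = 0` for all `a, b`. -/
def IsCyclicMap {A : Type*} [NonUnitalNormedRing A] [NormedSpace ℂ A]
    (D : A →L[ℂ] (A →L[ℂ] ℂ)) : Prop :=
  ∀ a b : A, D a b + D b a = 0

/-- `D : A → A*` is *inner* if `D = ad_F` for some `F ∈ A*`, where
`ad_F(a) = F·a - a·F`, i.e. `⟨ad_F(a), x⟩ = F(ax) - F(xa)`. -/
def IsInnerDerivation {A : Type*} [NonUnitalNormedRing A] [NormedSpace ℂ A]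
    (D : A →L[ℂ] (A →L[ℂ] ℂ)) : Prop :=
  ∃ F : A →L[ℂ] ℂ, ∀ a x : A, D a x = F (a * x) - F (x * a)

/-- A Banach algebra `A` is *cyclically weakly amenable* if every continuous derivation
from `A` into `A*` is cyclic. -/
def CyclicallyWeaklyAmenable (A : Type*) [NonUnitalNormedRing A] [NormedSpace ℂ A] : Prop :=
  ∀ D : A →L[ℂ] (A →L[ℂ] ℂ), IsDerivation D → IsCyclicMap D

/-- A Banach algebra `A` is *weakly amenable* if every continuous derivation
from `A` into `A*` is inner. -/
def WeaklyAmenable (A : Type*) [NonUnitalNormedRing A] [NormedSpace ℂ A] : Prop :=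
  ∀ D : A →L[ℂ] (A →L[ℂ] ℂ), IsDerivation D → IsInnerDerivation D

/-- A Banach algebra `A` is *cyclically amenable* if every continuous cyclic derivation
from `A` into `A*` is inner. -/
def CyclicallyAmenable (A : Type*) [NonUnitalNormedRing A] [NormedSpace ℂ A] : Prop :=
  ∀ D : A →L[ℂ] (A →L[ℂ] ℂ), IsDerivation D → IsCyclicMap D → IsInnerDerivation D

section

variable {A B : Type*} [NonUnitalNormedRing A] [NormedSpace ℂ A]
  [NonUnitalNormedRing B] [NormedSpace ℂ B]

theorem IsDerivation.bilinearComp {D : B →L[ℂ] (B →L[ℂ] ℂ)} (hD : IsDerivation D)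
    {φ : A →L[ℂ] B} (hφmul : ∀ a b : A, φ (a * b) = φ a * φ b) :
    IsDerivation (D.bilinearComp φ φ) := by
  intro a b x
  simpa only [ContinuousLinearMap.bilinearComp_apply, hφmul] using hD (φ a) (φ b) (φ x)

theorem IsInnerDerivation.of_denseRange {ι : Type*} {u : ι → A} (hu : DenseRange u)
    {D : A →L[ℂ] (A →L[ℂ] ℂ)} {F : A →L[ℂ] ℂ}
    (hD : ∀ i j, D (u i) (u j) = F (u i * u j) - F (u j * u i)) :
    IsInnerDerivation D := by
  have hclosed : IsClosed {p : A × A | D p.1 p.2 = F (p.1 * p.2) - F (p.2 * p.1)} :=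
    isClosed_eq (by fun_prop) (by fun_prop)
  exact ⟨F, hu.induction_on₂ hclosed hD⟩

theorem IsInnerDerivation.of_bilinearComp {D : B →L[ℂ] (B →L[ℂ] ℂ)} {φ : A →L[ℂ] B}
    (hD : IsInnerDerivation (D.bilinearComp φ φ))
    (hφmul : ∀ a b : A, φ (a * b) = φ a * φ b) (hφdense : DenseRange φ)
    (hφdual : ∀ f : A →L[ℂ] ℂ, ∃ F : B →L[ℂ] ℂ, ∀ a : A, f a = F (φ a)) :
    IsInnerDerivation D := by
  obtain ⟨f, hf⟩ := hD
  obtain ⟨F, hF⟩ := hφdual f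
  refine .of_denseRange hφdense (F := F) fun a x => ?_
  calc D (φ a) (φ x) = f (a * x) - f (x * a) := hf a x
    _ = F (φ a * φ x) - F (φ x * φ a) := by simp only [hF, hφmul]

theorem weaklyAmenable_of_denseRange_hom_general (φ : A →L[ℂ] B)
    (hφmul : ∀ a b : A, φ (a * b) = φ a * φ b) (hφdense : DenseRange φ)
    (hφdual : ∀ f : A →L[ℂ] ℂ, ∃ F : B →L[ℂ] ℂ, ∀ a : A, f a = F (φ a))
    (h : WeaklyAmenable A) :
    WeaklyAmenable B := by
  intro D hD
  have hpullback : IsInnerDerivation (D.bilinearComp φ φ) := h _ (hD.bilinearComp hφmul)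
  exact hpullback.of_bilinearComp hφmul hφdense hφdual

end

/-- If `φ : A₁ → A₂` is a continuous algebra homomorphism with dense range between complex
Banach algebras such that every functional in `A₁*` has the form `F ∘ φ` with `F ∈ A₂*`,
and `A₁` is weakly amenable, then so is `A₂`. -/
theorem weaklyAmenable_of_denseRange_hom {A₁ A₂ : Type*}
    [NonUnitalNormedRing A₁] [NormedSpace ℂ A₁] [IsScalarTower ℂ A₁ A₁]
    [SMulCommClass ℂ A₁ A₁] [CompleteSpace A₁]
    [NonUnitalNormedRing A₂] [NormedSpace ℂ A₂] [IsScalarTower ℂ A₂ A₂]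
    [SMulCommClass ℂ A₂ A₂] [CompleteSpace A₂]
    (φ : A₁ →L[ℂ] A₂) (hφmul : ∀ a b : A₁, φ (a * b) = φ a * φ b)
    (hφdense : DenseRange φ)
    (hφdual : ∀ f : A₁ →L[ℂ] ℂ, ∃ F : A₂ →L[ℂ] ℂ, ∀ a : A₁, f a = F (φ a))
    (h : WeaklyAmenable A₁) :
    WeaklyAmenable A₂ :=
  weaklyAmenable_of_denseRange_hom_general φ hφmul hφdense hφdual h
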